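/- arXiv:2312.15806 — 2 statements merged into one kernel-verified Lean document; each statement's English description precedes it below -/
import Mathlib

section
/- Let X = (X(n)) be a Markov chain on Z^2 with X(0) = (0,0) almost surely, whose transition probabilities from any point x ≠ (0,0) assign probability 1/4 to each of the four nearest neighbors of x, and whose jump from (0,0) has a distribution η on Z^2 \ {(0,0)} satisfying P{|η| > t} ~ a / log log t as t → ∞ for some constant a > 0 (here |·| is the Euclidean norm and P{X(1)=x} = P{η=x}). Then liminf_{n→∞} P{ max_{1 ≤ k ≤ n} |X(k)| > n } > 0. -/
/-!
Fix `n`, let `σ` be the first time the walk leaves the ball of radius `n`, and let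
`p = P{|η| > n}`, which is of order `1 / log log n`. Every visit to the origin before time `σ`
leads out of the ball at the next step with probability `p`, so `P{σ ≤ n} ≥ p E[N]`, where `N` is
the number of visits to the origin before time `min n σ`. It remains to see that `E[N]` is at least
of order `1 / p`, unless `P{σ ≤ n}` is itself bounded below. This is done with a Lyapunov function.

Put `φ = 1 - escape n`. It takes values in `[0, 1]`, `φ 0 = 1`, and with `λ = n / (n + 1)`
it satisfies `φ ≤ λ Pφ` off the origin, `P` being the transition operator (`subsolution`). At the
origin, `1 - λ E[φ(η)] ≤ C p` (`origin_bound`). Hence `λ ^ k φ(X k)`, stopped at `σ`, is a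
submartingale up to a loss of `C p` at each visit to the origin, and so
`1 ≤ λ ^ n + P{σ ≤ n} + C p E[N] ≤ 1 / 2 + (1 + C) P{σ ≤ n}` (`escape_prob_bound`).

The function `escape n` is built from `log (|z|² - 1/2)`. The shift `1/2` makes this function
superharmonic at every lattice point off the origin and its neighbours, because
`∏ (|x + e|² - 1/2) = (|x|² - 1/2)⁴ - 4 (x₁² - x₂²)²`, the product being over the four unit
vectors `e`. Giving the value `0` to the origin and adding the constant `5` elsewhere extends
superharmonicity to the neighbours of the origin (`logBarrier_superharmonic`). Dividing by
`log √n`, adding a multiple of `-|z|²` to create a drift `-1/n`, and truncating at `1` gives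
`escape n`. For `|z| ≤ exp √(log n)` it is `O(1 / √(log n))`, and `|η|` exceeds `exp √(log n)` with
probability of order `1 / log √(log n) = 2 / log log n`. Both are `O(p)`.
-/

open MeasureTheory ProbabilityTheory Filter

/-- Euclidean norm of a point of `ℤ × ℤ` (viewed inside `ℝ²`). -/
noncomputable def nrm2 (z : ℤ × ℤ) : ℝ := Real.sqrt ((z.1 : ℝ) ^ 2 + (z.2 : ℝ) ^ 2)

/-! ### A superharmonic barrier -/

/-- The squared Euclidean norm of a lattice point, as a real number. -/
def sqn (z : ℤ × ℤ) : ℝ := (z.1 : ℝ) ^ 2 + (z.2 : ℝ) ^ 2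

lemma one_le_sqn {z : ℤ × ℤ} (hz : z ≠ 0) : 1 ≤ sqn z := by
  obtain ⟨x, y⟩ := z
  have h : (0 : ℤ) < x ^ 2 + y ^ 2 := by
    by_contra h
    apply hz
    have hx : x = 0 := by nlinarith [sq_nonneg x, sq_nonneg y]
    have hy : y = 0 := by nlinarith [sq_nonneg x, sq_nonneg y]
    simp [hx, hy]
  have hone : (1 : ℤ) ≤ x ^ 2 + y ^ 2 := h
  unfold sqn
  exact_mod_cast hone

/-- The function `5 + log (|z|² - 1/2)`, set to `0` at the origin: a superharmonic substitute for the
potential kernel of the simple random walk on `ℤ²`. -/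
noncomputable def logBarrier (z : ℤ × ℤ) : ℝ :=
  if z = 0 then 0 else 5 + Real.log (sqn z - 1 / 2)

lemma logBarrier_ge_four {z : ℤ × ℤ} (hz : z ≠ 0) : 4 ≤ logBarrier z := by
  have h1 := one_le_sqn hz
  rw [logBarrier, if_neg hz]
  have h2 : Real.log (1 / 2) ≤ Real.log (sqn z - 1 / 2) :=
    Real.log_le_log (by norm_num) (by linarith)
  have h3 : Real.log (1 / 2) = - Real.log 2 := by
    rw [one_div, Real.log_inv]
  have := Real.log_two_lt_d9
  linarith

/-- The barrier is superharmonic for the simple random walk off the origin. At a neighbour of the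
origin this is the numerical inequality `log 126 ≤ 5`; elsewhere it is a product inequality. -/
lemma logBarrier_superharmonic {x : ℤ × ℤ} (hx : x ≠ 0) :
    logBarrier (x.1 + 1, x.2) + logBarrier (x.1 - 1, x.2) + logBarrier (x.1, x.2 + 1)
      + logBarrier (x.1, x.2 - 1) ≤ 4 * logBarrier x := by
  obtain ⟨u, v⟩ := x
  -- at `(1, 0)` the neighbours other than the origin have `|z|² - 1/2` equal to `7/2, 3/2, 3/2`
  have hlog : Real.log (7 / 2) + 2 * Real.log (3 / 2) + 4 * Real.log 2 ≤ 5 := by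
    have e : Real.log (7 / 2) + 2 * Real.log (3 / 2) + 4 * Real.log 2 = Real.log 126 := by
      rw [show (126 : ℝ) = (7 / 2) * (3 / 2) ^ 2 * 2 ^ 4 by norm_num,
        Real.log_mul (by norm_num) (by norm_num), Real.log_mul (by norm_num) (by norm_num),
        Real.log_pow, Real.log_pow]
      push_cast; ring
    rw [e, Real.log_le_iff_le_exp (by norm_num), show (5 : ℝ) = ((5 : ℕ) : ℝ) * 1 by norm_num,
      Real.exp_nat_mul]
    have h := Real.exp_one_gt_d9
    calc (126 : ℝ) ≤ 2.7182818283 ^ 5 := by norm_num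
      _ ≤ _ := pow_le_pow_left₀ (by norm_num) h.le 5
  have hhalf : Real.log (1 / 2) = - Real.log 2 := by rw [one_div, Real.log_inv]
  by_cases hs : u ^ 2 + v ^ 2 ≤ 1
  · have h1 : (u = 1 ∧ v = 0) ∨ (u = -1 ∧ v = 0) ∨ (u = 0 ∧ v = 1) ∨ (u = 0 ∧ v = -1) := by
      have hu1 : u ≤ 1 := by nlinarith [sq_nonneg v]
      have hu2 : -1 ≤ u := by nlinarith [sq_nonneg v]
      have hv1 : v ≤ 1 := by nlinarith [sq_nonneg u]
      have hv2 : -1 ≤ v := by nlinarith [sq_nonneg u]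
      interval_cases u <;> interval_cases v <;> simp_all
    rcases h1 with ⟨rfl, rfl⟩ | ⟨rfl, rfl⟩ | ⟨rfl, rfl⟩ | ⟨rfl, rfl⟩ <;>
    · norm_num [logBarrier, sqn, Prod.ext_iff]
      norm_num at hlog hhalf
      linarith
  · have hs2 : 2 ≤ u ^ 2 + v ^ 2 := by omega
    have n1 : ((u + 1, v) : ℤ × ℤ) ≠ 0 := by
      intro h; rw [Prod.ext_iff] at h; obtain ⟨h1, h2⟩ := h
      simp only [Prod.fst_zero, Prod.snd_zero] at h1 h2
      have : u = -1 := by omega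
      subst this; subst h2; norm_num at hs
    have n2 : ((u - 1, v) : ℤ × ℤ) ≠ 0 := by
      intro h; rw [Prod.ext_iff] at h; obtain ⟨h1, h2⟩ := h
      simp only [Prod.fst_zero, Prod.snd_zero] at h1 h2
      have : u = 1 := by omega
      subst this; subst h2; norm_num at hs
    have n3 : ((u, v + 1) : ℤ × ℤ) ≠ 0 := by
      intro h; rw [Prod.ext_iff] at h; obtain ⟨h1, h2⟩ := h
      simp only [Prod.fst_zero, Prod.snd_zero] at h1 h2
      have : v = -1 := by omega
      subst this; subst h1; norm_num at hs
    have n4 : ((u, v - 1) : ℤ × ℤ) ≠ 0 := by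
      intro h; rw [Prod.ext_iff] at h; obtain ⟨h1, h2⟩ := h
      simp only [Prod.fst_zero, Prod.snd_zero] at h1 h2
      have : v = 1 := by omega
      subst this; subst h1; norm_num at hs
    have p0 := one_le_sqn hx
    have p1 := one_le_sqn n1
    have p2 := one_le_sqn n2
    have p3 := one_le_sqn n3
    have p4 := one_le_sqn n4
    simp only [logBarrier, if_neg hx, if_neg n1, if_neg n2, if_neg n3, if_neg n4]
    have key : Real.log (sqn (u + 1, v) - 1 / 2) + Real.log (sqn (u - 1, v) - 1 / 2)
        + Real.log (sqn (u, v + 1) - 1 / 2) + Real.log (sqn (u, v - 1) - 1 / 2)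
        ≤ 4 * Real.log (sqn (u, v) - 1 / 2) := by
      have e : 4 * Real.log (sqn (u, v) - 1 / 2) = Real.log ((sqn (u, v) - 1 / 2) ^ 4) := by
        rw [Real.log_pow]; norm_num
      rw [e, ← Real.log_mul (by linarith) (by linarith),
        ← Real.log_mul (mul_ne_zero (by linarith) (by linarith)) (by linarith),
        ← Real.log_mul (mul_ne_zero (mul_ne_zero (by linarith) (by linarith)) (by linarith))
          (by linarith)]
      apply Real.log_le_log
      · have q1 : 0 < sqn (u + 1, v) - 1 / 2 := by linarith
        have q2 : 0 < sqn (u - 1, v) - 1 / 2 := by linarith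
        have q3 : 0 < sqn (u, v + 1) - 1 / 2 := by linarith
        have q4 : 0 < sqn (u, v - 1) - 1 / 2 := by linarith
        positivity
      · -- the difference of the two sides is `4 (u² - v²)²`
        simp only [sqn]
        push_cast
        nlinarith [sq_nonneg ((u : ℝ) ^ 2 - (v : ℝ) ^ 2)]
    linarith

/-- An upper barrier for the probability that the simple random walk from `z` takes time of order `n`
or more to hit the origin. It equals `1` far from the origin; in the disc `|z|² ≤ 2 √n` it is
`logBarrier z / log √n`, plus a small quadratic term producing a drift `-1/n`, truncated at `1`. -/
noncomputable def escape (n : ℝ) (z : ℤ × ℤ) : ℝ :=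
  if z = 0 then 0
  else if 2 * √n < sqn z then 1
  else min 1 (2 / Real.log n * logBarrier z + (4 * √n - sqn z) / n)

lemma escape_le_one (n : ℝ) (z : ℤ × ℤ) : escape n z ≤ 1 := by
  unfold escape
  split_ifs <;> simp

lemma escape_nonneg {n : ℝ} (hn : 4 ≤ n) (z : ℤ × ℤ) : 0 ≤ escape n z := by
  unfold escape
  split_ifs with h1 h2
  · exact le_rfl
  · exact zero_le_one
  · have hl : 0 < Real.log n := Real.log_pos (by linarith)
    have := logBarrier_ge_four h1
    have hs : 0 ≤ √n := Real.sqrt_nonneg n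
    refine le_min zero_le_one (add_nonneg (by positivity) ?_)
    exact div_nonneg (by linarith) (by linarith)

/-- The untruncated barrier is at least `1` on an annulus wide enough that no nearest-neighbour step
jumps over it, so truncating inside it keeps the barrier superharmonic. -/
lemma one_le_bar {n : ℝ} (hn : 4 ≤ n) {z : ℤ × ℤ} (hz : z ≠ 0)
    (h : √n + 1 / 2 ≤ sqn z) (h4 : sqn z ≤ 4 * √n) :
    1 ≤ 2 / Real.log n * logBarrier z + (4 * √n - sqn z) / n := by
  have hl : 0 < Real.log n := Real.log_pos (by linarith)
  have hs : 2 ≤ √n := Real.le_sqrt_of_sq_le (by linarith)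
  have h0 : 0 ≤ (4 * √n - sqn z) / n := div_nonneg (by linarith) (by linarith)
  have h1 : Real.log n / 2 ≤ logBarrier z := by
    rw [logBarrier, if_neg hz, ← Real.log_sqrt (by linarith)]
    have : Real.log (√n) ≤ Real.log (sqn z - 1 / 2) :=
      Real.log_le_log (by linarith) (by linarith)
    linarith
  have h2 : 1 ≤ 2 / Real.log n * logBarrier z := by
    calc (1 : ℝ) = 2 / Real.log n * (Real.log n / 2) := by field_simp
      _ ≤ _ := by gcongr
  linarith

lemma escape_le_bar {n : ℝ} (hn : 4 ≤ n) (z : ℤ × ℤ) (h4 : sqn z ≤ 4 * √n) :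
    escape n z ≤ 2 / Real.log n * logBarrier z + (4 * √n - sqn z) / n := by
  have hs : 2 ≤ √n := Real.le_sqrt_of_sq_le (by linarith)
  unfold escape
  split_ifs with h1 h2
  · rw [logBarrier, if_pos h1]
    have : 0 ≤ (4 * √n - sqn z) / n := div_nonneg (by linarith) (by linarith)
    linarith
  · exact one_le_bar hn h1 (by linarith) h4
  · exact min_le_right _ _

lemma escape_drift {n : ℝ} (hn : 4 ≤ n) {x : ℤ × ℤ} (hx : x ≠ 0) (h1 : escape n x < 1) :
    (escape n (x.1 + 1, x.2) + escape n (x.1 - 1, x.2) + escape n (x.1, x.2 + 1)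
      + escape n (x.1, x.2 - 1)) / 4 ≤ escape n x - 1 / n := by
  have hs : 2 ≤ √n := Real.le_sqrt_of_sq_le (by linarith)
  have hl : 0 < Real.log n := Real.log_pos (by linarith)
  have hbar : escape n x = 2 / Real.log n * logBarrier x + (4 * √n - sqn x) / n ∧
      sqn x < √n + 1 / 2 := by
    have h2 : ¬ 2 * √n < sqn x := by
      intro h2
      simp [escape, hx, h2] at h1
    have h3 : escape n x = min 1 (2 / Real.log n * logBarrier x + (4 * √n - sqn x) / n) := by
      simp [escape, hx, h2]
    have h4 : 2 / Real.log n * logBarrier x + (4 * √n - sqn x) / n < 1 := by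
      rw [h3] at h1
      simpa using h1
    refine ⟨by rw [h3, min_eq_right h4.le], ?_⟩
    by_contra h5
    have := one_le_bar hn hx (not_lt.mp h5) (by linarith)
    linarith
  obtain ⟨he, hlt⟩ := hbar
  have hsup := logBarrier_superharmonic hx
  obtain ⟨u, v⟩ := x
  simp only at hsup ⊢
  have hu := sq_nonneg ((u : ℝ) - 1)
  have hu' := sq_nonneg ((u : ℝ) + 1)
  have hv := sq_nonneg ((v : ℝ) - 1)
  have hv' := sq_nonneg ((v : ℝ) + 1)
  have hu2 := sq_nonneg (u : ℝ)
  have hv2 := sq_nonneg (v : ℝ)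
  have b1 := escape_le_bar hn (u + 1, v) (by simp only [sqn] at hlt ⊢; push_cast; nlinarith)
  have b2 := escape_le_bar hn (u - 1, v) (by simp only [sqn] at hlt ⊢; push_cast; nlinarith)
  have b3 := escape_le_bar hn (u, v + 1) (by simp only [sqn] at hlt ⊢; push_cast; nlinarith)
  have b4 := escape_le_bar hn (u, v - 1) (by simp only [sqn] at hlt ⊢; push_cast; nlinarith)
  have hsum : sqn (u + 1, v) + sqn (u - 1, v) + sqn (u, v + 1) + sqn (u, v - 1)
      = 4 * sqn (u, v) + 4 := by
    simp only [sqn]; push_cast; ring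
  have hdiv : (4 * √n - sqn (u + 1, v)) / n + (4 * √n - sqn (u - 1, v)) / n
      + (4 * √n - sqn (u, v + 1)) / n + (4 * √n - sqn (u, v - 1)) / n
      = 4 * ((4 * √n - sqn (u, v)) / n) - 4 * (1 / n) := by
    rw [← add_div, ← add_div, ← add_div, ← mul_div_assoc, ← mul_div_assoc, ← sub_div]
    congr 1
    linarith
  have hmul := mul_le_mul_of_nonneg_left hsup (show 0 ≤ 2 / Real.log n by positivity)
  rw [he]
  linarith

/-! ### The stopped chain -/

/-- Transition probabilities of the walk whose jump law at the origin is `ν`. -/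
noncomputable def kern (ν : ℤ × ℤ → ENNReal) (x y : ℤ × ℤ) : ENNReal :=
  if x = (0, 0) then ν y
  else if (y.1 - x.1) ^ 2 + (y.2 - x.2) ^ 2 = 1 then (1 : ENNReal) / 4 else 0

/-- The Markov property for functions of the whole past and the next position, obtained from the
cylinder-set hypothesis by summing over the countably many finite paths. -/
lemma lintegral_step {Ω : Type*} [MeasurableSpace Ω] (μ : Measure Ω) [IsProbabilityMeasure μ]
    (X : ℕ → Ω → ℤ × ℤ) (hXmeas : ∀ n, Measurable (X n)) (ν : ℤ × ℤ → ENNReal)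
    (hMarkov : ∀ (n : ℕ) (path : ℕ → ℤ × ℤ) (y : ℤ × ℤ),
        μ {ω | ∀ i ≤ n, X i ω = path i} ≠ 0 →
        μ[{ω | X (n + 1) ω = y} | {ω | ∀ i ≤ n, X i ω = path i}] = kern ν (path n) y)
    (k : ℕ) (g : (Fin (k + 1) → ℤ × ℤ) → ℤ × ℤ → ENNReal) :
    ∫⁻ ω, g (fun i => X i ω) (X (k + 1) ω) ∂μ
      = ∫⁻ ω, ∑' y, kern ν (X k ω) y * g (fun i => X i ω) y ∂μ := by
  have hY : Measurable (fun ω => (fun i : Fin (k + 1) => X i ω)) :=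
    measurable_pi_lambda _ fun i => hXmeas i
  have hYX : Measurable (fun ω => ((fun i : Fin (k + 1) => X i ω), X (k + 1) ω)) :=
    hY.prodMk (hXmeas _)
  have e1 : ∫⁻ ω, g (fun i => X i ω) (X (k + 1) ω) ∂μ
      = ∑' p : Fin (k + 1) → ℤ × ℤ, ∑' y : ℤ × ℤ, g p y *
        μ {ω | (fun i : Fin (k + 1) => X i ω) = p ∧ X (k + 1) ω = y} := by
    rw [← ENNReal.tsum_prod (f := fun p y => g p y *
        μ {ω | (fun i : Fin (k + 1) => X i ω) = p ∧ X (k + 1) ω = y})]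
    have := lintegral_map (μ := μ)
      (f := fun q : (Fin (k + 1) → ℤ × ℤ) × (ℤ × ℤ) => g q.1 q.2) (measurable_of_countable _) hYX
    rw [← this, lintegral_countable']
    refine tsum_congr fun q => ?_
    rw [Measure.map_apply hYX (measurableSet_singleton _)]
    congr 2
    ext ω
    simp [Prod.ext_iff]
  have e2 : ∫⁻ ω, ∑' y, kern ν (X k ω) y * g (fun i => X i ω) y ∂μ
      = ∑' p : Fin (k + 1) → ℤ × ℤ, (∑' y : ℤ × ℤ, kern ν (p (Fin.last k)) y * g p y) *
        μ {ω | (fun i : Fin (k + 1) => X i ω) = p} := by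
    have := lintegral_map (μ := μ)
      (f := fun p : Fin (k + 1) → ℤ × ℤ => ∑' y : ℤ × ℤ, kern ν (p (Fin.last k)) y * g p y)
      (measurable_of_countable _) hY
    simp only [Fin.val_last] at this
    rw [← this, lintegral_countable']
    refine tsum_congr fun q => ?_
    rw [Measure.map_apply hY (measurableSet_singleton _)]
    rfl
  rw [e1, e2]
  refine tsum_congr fun p => ?_
  rw [← ENNReal.tsum_mul_right]
  refine tsum_congr fun y => ?_
  -- extend the finite path `p` to a path indexed by `ℕ`
  set path : ℕ → ℤ × ℤ := fun i => if h : i < k + 1 then p ⟨i, h⟩ else 0 with hpath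
  have hset : {ω | (fun i : Fin (k + 1) => X i ω) = p} = {ω | ∀ i ≤ k, X i ω = path i} := by
    ext ω
    change (fun i : Fin (k + 1) => X i ω) = p ↔ ∀ i ≤ k, X i ω = path i
    rw [funext_iff]
    constructor
    · intro h i hi
      have hi' : i < k + 1 := by omega
      have := h ⟨i, hi'⟩
      rw [this]
      simp only [hpath, dif_pos hi']
    · intro h i
      have := h i (by omega)
      rw [this]
      simp only [hpath, dif_pos i.2]
  have hlast : path k = p (Fin.last k) := by simp [hpath, Fin.last]
  have hmeas : MeasurableSet {ω | (fun i : Fin (k + 1) => X i ω) = p} :=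
    hY (measurableSet_singleton p)
  have hjoint : μ {ω | (fun i : Fin (k + 1) => X i ω) = p ∧ X (k + 1) ω = y}
      = kern ν (p (Fin.last k)) y * μ {ω | (fun i : Fin (k + 1) => X i ω) = p} := by
    by_cases h0 : μ {ω | (fun i : Fin (k + 1) => X i ω) = p} = 0
    · rw [h0, mul_zero]
      exact measure_mono_null (fun ω h => h.1) h0
    · have hM := hMarkov k path y (by rwa [← hset])
      rw [← hset, hlast] at hM
      rw [← hM, cond_mul_eq_inter hmeas]
      rfl
  rw [hjoint]
  ring

/-- If `φ ≤ lam * Pφ` off the origin, and at the origin this fails by at most `C` times the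
probability of jumping into `F`, then `F` is visited by time `k` with probability at least
`(1 - lam ^ k) / (1 + C)`. -/
lemma escape_prob_bound {Ω : Type*} [MeasurableSpace Ω] (μ : Measure Ω) [IsProbabilityMeasure μ]
    (X : ℕ → Ω → ℤ × ℤ) (hXmeas : ∀ n, Measurable (X n)) (ν : ℤ × ℤ → ENNReal)
    (hX0 : ∀ᵐ ω ∂μ, X 0 ω = (0, 0))
    (hMarkov : ∀ (n : ℕ) (path : ℕ → ℤ × ℤ) (y : ℤ × ℤ),
        μ {ω | ∀ i ≤ n, X i ω = path i} ≠ 0 →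
        μ[{ω | X (n + 1) ω = y} | {ω | ∀ i ≤ n, X i ω = path i}] = kern ν (path n) y)
    (F : Set (ℤ × ℤ)) (h0F : (0, 0) ∉ F) (φ : ℤ × ℤ → ENNReal) (hφ0 : φ (0, 0) = 1)
    (hφ1 : ∀ x, φ x ≤ 1) (lam C : ENNReal) (hlam : lam ≤ 1)
    (hsub : ∀ x ≠ (0, 0), φ x ≤ lam * ∑' y, kern ν x y * φ y)
    (horig : 1 ≤ lam * ∑' y, ν y * φ y + C * ∑' y, ν y * F.indicator 1 y) (k : ℕ) :
    1 ≤ lam ^ k + (1 + C) * μ {ω | ∃ i ≤ k, X i ω ∈ F} := by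
  classical
  -- the expectation of `φ (X k)` on the event that `F` has not been visited up to time `k`
  set A : ℕ → ENNReal := fun k => ∫⁻ ω in {ω | ∀ i ≤ k, X i ω ∉ F}, φ (X k ω) ∂μ with hA
  have hSm : ∀ k, MeasurableSet {ω | ∀ i ≤ k, X i ω ∉ F} := by
    intro k
    have : {ω | ∀ i ≤ k, X i ω ∉ F} = ⋂ i, ⋂ (_ : i ≤ k), (X i ⁻¹' F)ᶜ := by
      ext ω; simp
    rw [this]
    exact MeasurableSet.iInter fun i => MeasurableSet.iInter fun _ =>
      (hXmeas i (Set.to_countable F).measurableSet).compl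
  have hA1 : ∀ k, A k ≤ 1 := by
    intro k
    calc A k ≤ ∫⁻ ω in {ω | ∀ i ≤ k, X i ω ∉ F}, 1 ∂μ := lintegral_mono fun ω => hφ1 _
      _ ≤ 1 := by simpa using prob_le_one
  have hstep : ∀ k (f : ℤ × ℤ → ENNReal),
      ∫⁻ ω in {ω | ∀ i ≤ k, X i ω ∉ F}, f (X (k + 1) ω) ∂μ
        = ∫⁻ ω in {ω | ∀ i ≤ k, X i ω ∉ F}, ∑' y, kern ν (X k ω) y * f y ∂μ := by
    intro k f
    have h := lintegral_step μ X hXmeas ν hMarkov k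
      (fun p y => if ∀ i, p i ∉ F then f y else 0)
    rw [← lintegral_indicator (hSm k), ← lintegral_indicator (hSm k)]
    have hiff : ∀ ω, (∀ i : Fin (k + 1), X i ω ∉ F) ↔ ω ∈ {ω | ∀ i ≤ k, X i ω ∉ F} := by
      intro ω
      constructor
      · intro h i hi; exact h ⟨i, by omega⟩
      · intro h i; exact h i (by omega)
    simp only [hiff] at h
    convert h using 1
    all_goals
      refine lintegral_congr fun ω => ?_
      by_cases hω : ω ∈ {ω | ∀ i ≤ k, X i ω ∉ F} <;> simp [hω]
  -- The loss at the origin is `C` times the chance of entering `F` at the next step, and the part of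
  -- `φ (X (k + 1))` lost by stopping at the entrance to `F` is at most that chance, as `φ ≤ 1`.
  have hrec : ∀ k, A k ≤ lam * A (k + 1)
      + (1 + C) * μ {ω | (∀ i ≤ k, X i ω ∉ F) ∧ X (k + 1) ω ∈ F} := by
    intro k
    set d := μ {ω | (∀ i ≤ k, X i ω ∉ F) ∧ X (k + 1) ω ∈ F} with hd
    have hFm : ∀ j, MeasurableSet {ω | X j ω ∈ F} := fun j =>
      hXmeas j (Set.to_countable F).measurableSet
    have hpt : ∀ x, φ x ≤ lam * ∑' y, kern ν x y * φ y
        + C * ∑' y, kern ν x y * F.indicator 1 y := by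
      intro x
      by_cases hx : x = (0, 0)
      · subst hx
        rw [hφ0]
        simpa [kern] using horig
      · exact (hsub x hx).trans le_self_add
    have hind : ∫⁻ ω in {ω | ∀ i ≤ k, X i ω ∉ F}, F.indicator 1 (X (k + 1) ω) ∂μ = d := by
      have : (fun ω => F.indicator (1 : ℤ × ℤ → ENNReal) (X (k + 1) ω))
          = {ω | X (k + 1) ω ∈ F}.indicator 1 := by
        ext ω; simp [Set.indicator]
      rw [this, lintegral_indicator_one (hFm _), Measure.restrict_apply (hFm _), hd]
      congr 1
      ext ω
      simp [and_comm]
    have hmeasf : ∀ f : ℤ × ℤ → ENNReal, Measurable fun ω => f (X k ω) := fun f =>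
      (measurable_of_countable f).comp (hXmeas k)
    have hnext : ∫⁻ ω in {ω | ∀ i ≤ k, X i ω ∉ F}, φ (X (k + 1) ω) ∂μ ≤ A (k + 1) + d := by
      rw [← hind, hA]
      simp only
      rw [← lintegral_indicator (hSm k), ← lintegral_indicator (hSm (k + 1)),
        ← lintegral_indicator (hSm k), ← lintegral_add_right]
      · refine lintegral_mono fun ω => ?_
        by_cases hω : ω ∈ {ω | ∀ i ≤ k, X i ω ∉ F}
        · by_cases hω' : X (k + 1) ω ∈ F
          · simp only [Set.indicator_of_mem hω, Set.indicator_of_mem hω']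
            exact (hφ1 _).trans le_add_self
          · have hω2 : ω ∈ {ω | ∀ i ≤ k + 1, X i ω ∉ F} := by
              intro i hi
              rcases Nat.lt_or_ge i (k + 1) with h | h
              · exact hω i (by omega)
              · rwa [show i = k + 1 by omega]
            simp only [Set.indicator_of_mem hω, Set.indicator_of_mem hω2]
            exact le_self_add
        · simp only [Set.indicator_of_notMem hω]
          exact zero_le
      · exact ((measurable_of_countable (F.indicator 1)).comp (hXmeas (k + 1))).indicator (hSm k)
    calc A k ≤ ∫⁻ ω in {ω | ∀ i ≤ k, X i ω ∉ F}, (lam * ∑' y, kern ν (X k ω) y * φ y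
        + C * ∑' y, kern ν (X k ω) y * F.indicator 1 y) ∂μ := lintegral_mono fun ω => hpt _
      _ = lam * ∫⁻ ω in {ω | ∀ i ≤ k, X i ω ∉ F}, φ (X (k + 1) ω) ∂μ + C * d := by
        rw [lintegral_add_left (hmeasf fun x => lam * ∑' y, kern ν x y * φ y),
          lintegral_const_mul _ (hmeasf fun x => ∑' y, kern ν x y * φ y),
          lintegral_const_mul _ (hmeasf fun x => ∑' y, kern ν x y * F.indicator 1 y),
          ← hstep k φ, ← hstep k (F.indicator 1), hind]
      _ ≤ lam * (A (k + 1) + d) + C * d := by gcongr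
      _ = lam * A (k + 1) + (lam * d + C * d) := by ring
      _ ≤ lam * A (k + 1) + (1 * d + C * d) := by gcongr
      _ = _ := by ring
  have hA0 : A 0 = 1 := by
    have h1 : ∀ᵐ ω ∂μ, {ω | ∀ i ≤ 0, X i ω ∉ F}.indicator (fun ω => φ (X 0 ω)) ω = 1 := by
      filter_upwards [hX0] with ω hω
      have : ω ∈ {ω | ∀ i ≤ 0, X i ω ∉ F} := by
        intro i hi
        rw [Nat.le_zero.mp hi, hω]; exact h0F
      rw [Set.indicator_of_mem this, hω, hφ0]
    simp only [hA]
    rw [← lintegral_indicator (hSm 0), lintegral_congr_ae h1]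
    simp
  have hall : ∀ k, 1 ≤ lam ^ k * A k + (1 + C) * μ {ω | ∃ i ≤ k, X i ω ∈ F} := by
    intro k
    induction k with
    | zero => rw [hA0]; simp
    | succ k ih =>
      have hdisj : μ {ω | (∀ i ≤ k, X i ω ∉ F) ∧ X (k + 1) ω ∈ F}
          + μ {ω | ∃ i ≤ k, X i ω ∈ F} ≤ μ {ω | ∃ i ≤ k + 1, X i ω ∈ F} := by
        have hm : MeasurableSet {ω | ∃ i ≤ k, X i ω ∈ F} := by
          convert (hSm k).compl using 1
          ext ω; simp
        rw [← measure_union _ hm]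
        · apply measure_mono
          rintro ω (h | ⟨i, hi, h⟩)
          · exact ⟨k + 1, le_rfl, h.2⟩
          · exact ⟨i, by omega, h⟩
        · rw [Set.disjoint_left]
          rintro ω h ⟨i, hi, h'⟩
          exact h.1 i hi h'
      calc (1 : ENNReal) ≤ lam ^ k * A k + (1 + C) * μ {ω | ∃ i ≤ k, X i ω ∈ F} := ih
        _ ≤ lam ^ k * (lam * A (k + 1)
            + (1 + C) * μ {ω | (∀ i ≤ k, X i ω ∉ F) ∧ X (k + 1) ω ∈ F})
            + (1 + C) * μ {ω | ∃ i ≤ k, X i ω ∈ F} := by gcongr; exact hrec k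
        _ = lam ^ (k + 1) * A (k + 1)
            + lam ^ k * ((1 + C) * μ {ω | (∀ i ≤ k, X i ω ∉ F) ∧ X (k + 1) ω ∈ F})
            + (1 + C) * μ {ω | ∃ i ≤ k, X i ω ∈ F} := by ring
        _ ≤ lam ^ (k + 1) * A (k + 1)
            + 1 * ((1 + C) * μ {ω | (∀ i ≤ k, X i ω ∉ F) ∧ X (k + 1) ω ∈ F})
            + (1 + C) * μ {ω | ∃ i ≤ k, X i ω ∈ F} := by
          gcongr; exact pow_le_one₀ zero_le hlam
        _ = lam ^ (k + 1) * A (k + 1)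
            + (1 + C) * (μ {ω | (∀ i ≤ k, X i ω ∉ F) ∧ X (k + 1) ω ∈ F}
            + μ {ω | ∃ i ≤ k, X i ω ∈ F}) := by ring
        _ ≤ _ := by gcongr
  calc (1 : ENNReal) ≤ lam ^ k * A k + (1 + C) * μ {ω | ∃ i ≤ k, X i ω ∈ F} := hall k
    _ ≤ lam ^ k * 1 + (1 + C) * μ {ω | ∃ i ≤ k, X i ω ∈ F} := by gcongr; exact hA1 k
    _ = _ := by rw [mul_one]

/-! ### The transition operator on the barrier and the tail of the jump -/

/-- Off the origin `φ = 1 - escape n` satisfies `φ ≤ n / (n + 1) * Pφ`: where `φ > 0` the drift of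
`escape n` gives `Pφ ≥ φ + 1/n ≥ (1 + 1/n) φ`. -/
lemma subsolution {n : ℝ} (hn : 4 ≤ n) (ν : ℤ × ℤ → ENNReal) {x : ℤ × ℤ} (hx : x ≠ (0, 0)) :
    ENNReal.ofReal (1 - escape n x) ≤ ENNReal.ofReal (n / (n + 1)) *
      ∑' y, kern ν x y * ENNReal.ofReal (1 - escape n y) := by
  rcases (escape_le_one n x).eq_or_lt with h | h
  · simp [h]
  have hd := escape_drift hn hx h
  obtain ⟨u, v⟩ := x
  simp only at hd
  have e1 := escape_le_one n (u + 1, v)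
  have e2 := escape_le_one n (u - 1, v)
  have e3 := escape_le_one n (u, v + 1)
  have e4 := escape_le_one n (u, v - 1)
  have hsum : ENNReal.ofReal ((1 - escape n (u + 1, v)) / 4 + (1 - escape n (u - 1, v)) / 4
      + (1 - escape n (u, v + 1)) / 4 + (1 - escape n (u, v - 1)) / 4)
      ≤ ∑' y, kern ν (u, v) y * ENNReal.ofReal (1 - escape n y) := by
    refine le_trans (le_of_eq ?_) (ENNReal.sum_le_tsum
      ({(u + 1, v), (u - 1, v), (u, v + 1), (u, v - 1)} : Finset (ℤ × ℤ)))
    rw [Finset.sum_insert, Finset.sum_insert, Finset.sum_insert, Finset.sum_singleton,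
      ENNReal.ofReal_add, ENNReal.ofReal_add, ENNReal.ofReal_add]
    · have hq : ∀ r : ℝ, ENNReal.ofReal (r / 4) = (1 : ENNReal) / 4 * ENNReal.ofReal r := by
        intro r
        rw [ENNReal.ofReal_div_of_pos (by norm_num), div_eq_mul_inv, mul_comm, one_div]
        norm_num
      simp only [hq, kern, if_neg hx]
      simp [add_assoc]
    any_goals linarith
    all_goals simp
    all_goals omega
  refine le_trans ?_ (mul_le_mul_right hsum _)
  rw [← ENNReal.ofReal_mul (by positivity)]
  apply ENNReal.ofReal_le_ofReal
  have hx0 := escape_nonneg hn (u, v)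
  have hn1 : 0 < n + 1 := by linarith
  have hn0 : 0 < n := by linarith
  calc 1 - escape n (u, v) = n / (n + 1) * ((1 + 1 / n) * (1 - escape n (u, v))) := by
        field_simp
    _ ≤ _ := by
        gcongr
        have : 0 ≤ 1 / n := by positivity
        nlinarith

lemma tsum_law {Ω : Type*} [MeasurableSpace Ω] (μ : Measure Ω) {η : Ω → ℤ × ℤ}
    (hη : Measurable η) (f : ℤ × ℤ → ENNReal) :
    ∑' y, μ {ω | η ω = y} * f y = ∫⁻ ω, f (η ω) ∂μ := by
  rw [← lintegral_map (measurable_of_countable f) hη, lintegral_countable']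
  refine tsum_congr fun y => ?_
  rw [Measure.map_apply hη (measurableSet_singleton y), mul_comm]
  rfl

lemma escape_le_near {n : ℝ} (hn : Real.exp 16 ≤ n) (z : ℤ × ℤ)
    (hz : nrm2 z ≤ Real.exp √(Real.log n)) :
    escape n z ≤ 2 / Real.log n * (5 + 2 * √(Real.log n)) + 4 * √n / n := by
  have hn0 : 0 < n := (Real.exp_pos _).trans_le hn
  have hl : 16 ≤ Real.log n := (Real.le_log_iff_exp_le hn0).2 hn
  have hn4 : 4 ≤ n := by linarith [Real.add_one_le_exp 16]
  have hsl : 4 ≤ √(Real.log n) := Real.le_sqrt_of_sq_le (by linarith)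
  have hsq : √(Real.log n) ^ 2 = Real.log n := Real.sq_sqrt (by linarith)
  have hs : sqn z ≤ Real.exp (2 * √(Real.log n)) := by
    have h0 : 0 ≤ sqn z := by unfold sqn; positivity
    have h1 : nrm2 z ^ 2 = sqn z := Real.sq_sqrt h0
    rw [← h1, two_mul, Real.exp_add, ← pow_two]
    exact pow_le_pow_left₀ (Real.sqrt_nonneg _) hz 2
  have hroot : √n = Real.exp (Real.log n / 2) := by
    rw [← Real.log_sqrt hn0.le, Real.exp_log (Real.sqrt_pos.2 hn0)]
  have h4 : sqn z ≤ 4 * √n := by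
    have : Real.exp (2 * √(Real.log n)) ≤ √n := by
      rw [hroot]
      apply Real.exp_le_exp.2
      nlinarith
    linarith [Real.sqrt_nonneg n]
  refine (escape_le_bar hn4 z h4).trans ?_
  have h0 : 0 ≤ sqn z := by unfold sqn; positivity
  have hB : logBarrier z ≤ 5 + 2 * √(Real.log n) := by
    unfold logBarrier
    split_ifs with hz0
    · linarith
    · have h1 := one_le_sqn hz0
      have : Real.log (sqn z - 1 / 2) ≤ 2 * √(Real.log n) := by
        rw [Real.log_le_iff_le_exp (by linarith)]
        linarith
      linarith
  gcongr
  linarith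

/-- The defect of `1 - escape n` at the origin is at most ten times the probability of a jump beyond
distance `n`, as soon as the listed error terms are. -/
lemma origin_bound {Ω : Type*} [MeasurableSpace Ω] (μ : Measure Ω) [IsProbabilityMeasure μ]
    {η : Ω → ℤ × ℤ} (hη : Measurable η) {n : ℝ} (hn : Real.exp 16 ≤ n) {v : ℝ}
    (hv : v = 2 / Real.log n * (5 + 2 * √(Real.log n)) + 4 * √n / n) (hv1 : v ≤ 1)
    (hC : 1 / n + v + (μ {ω | Real.exp √(Real.log n) < nrm2 (η ω)}).toReal
      ≤ 10 * (μ {ω | n < nrm2 (η ω)}).toReal) :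
    1 ≤ ENNReal.ofReal (n / (n + 1)) *
        ∑' y, μ {ω | η ω = y} * ENNReal.ofReal (1 - escape n y)
      + 10 * ∑' y, μ {ω | η ω = y} * {z | n < nrm2 z}.indicator 1 y := by
  have hn0 : 0 < n := (Real.exp_pos _).trans_le hn
  have hl : 16 ≤ Real.log n := (Real.le_log_iff_exp_le hn0).2 hn
  have hv0 : 0 ≤ v := by rw [hv]; positivity
  have hmF : ∀ t : ℝ, MeasurableSet {ω | t < nrm2 (η ω)} := fun t =>
    hη (Set.to_countable {z | t < nrm2 z}).measurableSet
  set t := Real.exp √(Real.log n) with ht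
  rw [tsum_law μ hη, tsum_law μ hη]
  have hp : ∫⁻ ω, {z | n < nrm2 z}.indicator 1 (η ω) ∂μ = μ {ω | n < nrm2 (η ω)} := by
    rw [← lintegral_indicator_one (hmF n)]
    rfl
  have hφ : ENNReal.ofReal (1 - v) * μ {ω | t < nrm2 (η ω)}ᶜ
      ≤ ∫⁻ ω, ENNReal.ofReal (1 - escape n (η ω)) ∂μ := by
    rw [← lintegral_indicator_const (hmF t).compl]
    refine lintegral_mono fun ω => ?_
    by_cases hω : ω ∈ {ω | t < nrm2 (η ω)}ᶜ
    · rw [Set.indicator_of_mem hω]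
      apply ENNReal.ofReal_le_ofReal
      have := escape_le_near hn (η ω) (not_lt.mp hω)
      linarith
    · rw [Set.indicator_of_notMem hω]
      exact zero_le
  rw [hp]
  refine le_trans ?_ (add_le_add_left (mul_le_mul_right hφ _) _)
  have hT : μ {ω | t < nrm2 (η ω)}ᶜ = ENNReal.ofReal (1 - (μ {ω | t < nrm2 (η ω)}).toReal) := by
    rw [prob_compl_eq_one_sub (hmF t), ENNReal.ofReal_sub _ ENNReal.toReal_nonneg,
      ENNReal.ofReal_toReal (measure_ne_top _ _), ENNReal.ofReal_one]
  rw [hT, ← ENNReal.ofReal_toReal (measure_ne_top μ {ω | n < nrm2 (η ω)})]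
  set P := (μ {ω | t < nrm2 (η ω)}).toReal with hP
  set p := (μ {ω | n < nrm2 (η ω)}).toReal with hp'
  have hP0 : 0 ≤ P := ENNReal.toReal_nonneg
  have hp0 : 0 ≤ p := ENNReal.toReal_nonneg
  have hP1 : P ≤ 1 := by
    rw [hP]; exact ENNReal.toReal_le_of_le_ofReal zero_le_one (by simpa using prob_le_one)
  rw [show (10 : ENNReal) = ENNReal.ofReal 10 by simp,
    ← ENNReal.ofReal_mul (by linarith), ← ENNReal.ofReal_mul (by positivity),
    ← ENNReal.ofReal_mul (by norm_num), ← ENNReal.ofReal_add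
      (mul_nonneg (by positivity) (mul_nonneg (by linarith) (by linarith))) (by positivity),
    ENNReal.one_le_ofReal]
  have hlam : 1 - 1 / n ≤ n / (n + 1) := by
    rw [show n / (n + 1) = 1 - 1 / (n + 1) by field_simp; ring]
    have : 1 / (n + 1) ≤ 1 / n := by gcongr; linarith
    linarith
  have hlam1 : n / (n + 1) ≤ 1 := by
    rw [div_le_one (by linarith)]; linarith
  have hm : 1 - (v + P) ≤ (1 - v) * (1 - P) := by nlinarith
  have hl0 : 0 ≤ n / (n + 1) := by positivity
  have hvP : 0 ≤ v + P := by linarith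
  nlinarith [mul_le_mul_of_nonneg_left hm hl0]

/-- The error terms of `origin_bound` are eventually small enough. The point is that
`log log (exp √(log n)) = (log log n) / 2`, so `P{|η| > exp √(log n)}` is comparable with
`P{|η| > n}`, while the remaining terms are `O(1 / √(log n))`. -/
lemma eventually_tails {Ω : Type*} [MeasurableSpace Ω] (μ : Measure Ω) {η : Ω → ℤ × ℤ}
    {a : ℝ} (ha : 0 < a)
    (hηtail : Tendsto (fun t : ℝ =>
        Real.log (Real.log t) * (μ {ω | t < nrm2 (η ω)}).toReal) atTop (nhds a)) :
    ∀ᶠ n : ℝ in atTop, 2 / Real.log n * (5 + 2 * √(Real.log n)) + 4 * √n / n ≤ 1 ∧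
      1 / n + (2 / Real.log n * (5 + 2 * √(Real.log n)) + 4 * √n / n)
        + (μ {ω | Real.exp √(Real.log n) < nrm2 (η ω)}).toReal
      ≤ 10 * (μ {ω | n < nrm2 (η ω)}).toReal := by
  have hsqrt : Tendsto (fun n : ℝ => √(Real.log n)) atTop atTop :=
    Real.tendsto_sqrt_atTop.comp Real.tendsto_log_atTop
  have hT := hηtail.comp (Real.tendsto_exp_atTop.comp hsqrt)
  have hsmall : Tendsto (fun n : ℝ => Real.log (Real.log n) / √(Real.log n)) atTop (nhds 0) := by
    have h := (isLittleO_log_rpow_atTop (show (0 : ℝ) < 1 / 2 by norm_num)).tendsto_div_nhds_zero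
    have h2 := h.comp Real.tendsto_log_atTop
    simpa [Function.comp_def, Real.sqrt_eq_rpow] using h2
  filter_upwards [hηtail.eventually (lt_mem_nhds (show a / 2 < a by linarith)),
    hT.eventually (gt_mem_nhds (show a < 2 * a by linarith)),
    hsmall.eventually (gt_mem_nhds (show 0 < a / 19 by linarith)),
    eventually_ge_atTop (Real.exp 400)] with n h1 h2 h3 hn
  have hn0 : 0 < n := (Real.exp_pos _).trans_le hn
  have hl : 400 ≤ Real.log n := (Real.le_log_iff_exp_le hn0).2 hn
  have hs : 20 ≤ √(Real.log n) := Real.le_sqrt_of_sq_le (by linarith)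
  have hsq : √(Real.log n) * √(Real.log n) = Real.log n := Real.mul_self_sqrt (by linarith)
  have hln : Real.log n ≤ n := (Real.log_le_sub_one_of_pos hn0).trans (by linarith)
  have hL : 0 < Real.log (Real.log n) := Real.log_pos (by linarith)
  set s := √(Real.log n) with hsdef
  have hs0 : 0 < s := by linarith
  have hb1 : 1 / n ≤ 1 / s := by
    gcongr; nlinarith
  have hb2 : 4 * √n / n ≤ 4 / s := by
    have : √n * √n = n := Real.mul_self_sqrt hn0.le
    have hpos : 0 < √n := Real.sqrt_pos.2 hn0
    have : 4 * √n / n = 4 / √n := by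
      rw [div_eq_div_iff hn0.ne' hpos.ne']; linarith
    rw [this]
    gcongr
    exact Real.sqrt_le_sqrt hln
  have hb3 : 2 / Real.log n * (5 + 2 * s) ≤ 14 / s := by
    rw [← hsq, div_mul_eq_mul_div, div_le_div_iff₀ (by positivity) hs0]
    nlinarith
  have hsum : 1 / n + (2 / Real.log n * (5 + 2 * s) + 4 * √n / n) ≤ 19 / s := by
    have : 19 / s = 1 / s + (14 / s + 4 / s) := by ring
    linarith
  have h19 : 19 / s ≤ 1 := by rw [div_le_one hs0]; linarith
  refine ⟨by have : 0 ≤ 1 / n := by positivity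
             linarith, ?_⟩
  simp only [Function.comp, Real.log_exp] at h2
  rw [Real.log_sqrt (by linarith), ← hsdef] at h2
  -- multiply the claim by `log log n`
  refine le_of_mul_le_mul_left ?_ hL
  have h4 : Real.log (Real.log n) * (19 / s) ≤ a := by
    have : Real.log (Real.log n) * (19 / s) = 19 * (Real.log (Real.log n) / s) := by ring
    rw [this]; linarith
  have h5 := mul_le_mul_of_nonneg_left hsum hL.le
  nlinarith

/-- Let `X` be a Markov chain on `ℤ²` with `X 0 = (0,0)` a.s., which from any
point `x ≠ (0,0)` moves to each of the four nearest neighbours of `x` with probability `1/4`,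
and whose jump from `(0,0)` has the distribution of a random variable `η` taking values in
`ℤ² \ {(0,0)}` with `P{|η| > t} ~ a / log log t` as `t → ∞`, for some `a > 0`. Then
`liminf_{n→∞} P{ max_{1 ≤ k ≤ n} |X(k)| > n } > 0`. -/
theorem locally_perturbed_walk_not_tight
    {Ω : Type*} [MeasurableSpace Ω] (μ : Measure Ω) [IsProbabilityMeasure μ]
    (X : ℕ → Ω → ℤ × ℤ) (hXmeas : ∀ n, Measurable (X n))
    (η : Ω → ℤ × ℤ) (hηmeas : Measurable η)
    (a : ℝ) (ha : 0 < a)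
    -- `X(0) = (0,0)` almost surely
    (hX0 : ∀ᵐ ω ∂μ, X 0 ω = (0, 0))
    -- `η` takes values in `ℤ² \ {(0,0)}`
    (hη0 : μ {ω | η ω = (0, 0)} = 0)
    -- `P{|η| > t} ~ a / log log t` as `t → ∞`
    (hηtail : Tendsto (fun t : ℝ =>
        Real.log (Real.log t) * (μ {ω | t < nrm2 (η ω)}).toReal) atTop (nhds a))
    -- Markov property with the prescribed transition kernel: from `x ≠ (0,0)` a simple
    -- random walk step (probability `1/4` to each of the four nearest neighbours),
    -- from `(0,0)` a step distributed as `η`.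
    (hMarkov : ∀ (n : ℕ) (path : ℕ → ℤ × ℤ) (y : ℤ × ℤ),
        μ {ω | ∀ i ≤ n, X i ω = path i} ≠ 0 →
        μ[{ω | X (n + 1) ω = y} | {ω | ∀ i ≤ n, X i ω = path i}] =
          (if path n = (0, 0) then μ {ω | η ω = y}
           else if (y.1 - (path n).1) ^ 2 + (y.2 - (path n).2) ^ 2 = 1
             then (1 : ENNReal) / 4 else 0)) :
    0 < Filter.liminf (fun n : ℕ =>
        (μ {ω | ∃ k, 1 ≤ k ∧ k ≤ n ∧ (n : ℝ) < nrm2 (X k ω)}).toReal) atTop := by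
  have hev : ∀ᶠ n : ℕ in atTop, (1 : ℝ) / 22 ≤
      (μ {ω | ∃ k, 1 ≤ k ∧ k ≤ n ∧ (n : ℝ) < nrm2 (X k ω)}).toReal := by
    filter_upwards [tendsto_natCast_atTop_atTop.eventually (eventually_tails μ ha hηtail),
      tendsto_natCast_atTop_atTop.eventually (eventually_ge_atTop (Real.exp 16))]
      with n ⟨h1, h2⟩ hn
    have hn4 : (4 : ℝ) ≤ n := by linarith [Real.add_one_le_exp 16]
    have hn0 : (0 : ℝ) < n := by linarith
    have hlam1 : (n : ℝ) / (n + 1) ≤ 1 := by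
      rw [div_le_one (by linarith)]; linarith
    have hmain := escape_prob_bound μ X hXmeas (fun y => μ {ω | η ω = y}) hX0 hMarkov
      {z | (n : ℝ) < nrm2 z} (by simp [nrm2]) (fun z => ENNReal.ofReal (1 - escape n z))
      (by simp [escape])
      (fun x => by
        rw [ENNReal.ofReal_le_one]
        linarith [escape_nonneg hn4 x])
      (ENNReal.ofReal ((n : ℝ) / (n + 1))) 10 (ENNReal.ofReal_le_one.2 hlam1)
      (fun x hx => subsolution hn4 _ hx) (origin_bound μ hηmeas hn rfl h1 h2) n
    have hD : μ {ω | ∃ i ≤ n, X i ω ∈ {z | (n : ℝ) < nrm2 z}}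
        ≤ μ {ω | ∃ k, 1 ≤ k ∧ k ≤ n ∧ (n : ℝ) < nrm2 (X k ω)} := by
      apply measure_mono_ae
      filter_upwards [hX0] with ω hω
      rintro ⟨i, hi, h⟩
      refine ⟨i, Nat.one_le_iff_ne_zero.2 ?_, hi, h⟩
      rintro rfl
      have h' : (n : ℝ) < nrm2 (X 0 ω) := h
      rw [hω] at h'
      simp [nrm2] at h'
      linarith
    set D := μ {ω | ∃ k, 1 ≤ k ∧ k ≤ n ∧ (n : ℝ) < nrm2 (X k ω)} with hDdef
    -- Bernoulli: `(n / (n + 1)) ^ n ≤ 1 / 2`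
    have hpow : ((n : ℝ) / (n + 1)) ^ n ≤ 1 / 2 := by
      have hb : (2 : ℝ) ≤ (1 + 1 / (n : ℝ)) ^ n := by
        have := one_add_mul_le_pow (show (-2 : ℝ) ≤ 1 / n by
          have : (0 : ℝ) ≤ 1 / n := by positivity
          linarith) n
        have e : (n : ℝ) * (1 / n) = 1 := by field_simp
        linarith
      have e : (n : ℝ) / (n + 1) = (1 + 1 / (n : ℝ))⁻¹ := by field_simp
      rw [e, inv_pow, show (1 : ℝ) / 2 = 2⁻¹ by norm_num]
      exact inv_anti₀ (by norm_num) hb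
    have hfin : (1 : ENNReal) ≤ ENNReal.ofReal (1 / 2) + (1 + 10) * D := by
      refine hmain.trans (add_le_add ?_ (mul_le_mul_right hD _))
      rw [← ENNReal.ofReal_pow (by positivity)]
      exact ENNReal.ofReal_le_ofReal hpow
    rw [← ENNReal.ofReal_toReal (show D ≠ ⊤ from measure_ne_top μ _),
      show (1 + 10 : ENNReal) = ENNReal.ofReal 11 by norm_num,
      ← ENNReal.ofReal_mul (by norm_num), ← ENNReal.ofReal_add (by norm_num)
        (mul_nonneg (by norm_num) ENNReal.toReal_nonneg), ENNReal.one_le_ofReal] at hfin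
    linarith
  refine lt_of_lt_of_le (show (0 : ℝ) < 1 / 22 by norm_num) ?_
  refine le_liminf_of_le ?_ hev
  refine IsBoundedUnder.isCoboundedUnder_ge ⟨1, ?_⟩
  refine eventually_map.2 (Eventually.of_forall fun n => ?_)
  exact ENNReal.toReal_le_of_le_ofReal zero_le_one (by simpa using prob_le_one)
end

section
/- Let d = 2 and let X be a standard random walk perturbed on a finite set A ⊂ Z^2 (with transition probabilities given by ξ outside A and by η^{(x)} from x ∈ A), with E[ξ] = (0,0), E[|ξ|^2] < ∞, Condition B in force, and max_{x∈A} P{|η^{(x)}| > t} = o(1/log t) as t → ∞. Fix u ∈ A, v ∈ Z^2 \ A, l ∈ N and distinct points v_1, …, v_{l−1} ∈ A \ {u}. Let X̃ be a Markov chain with X̃(0) distributed as X(0), whose transition probabilities from points x ∉ A coincide with those of X (i.e. P{X̃(1) = y | X̃(0) = x} = P{ξ = y − x}), and which jumps deterministically to v from every point of A. Then for all c > 0 and all n ∈ N, P{ Σ_{k=0}^{n} 1{X(k)=u, X(k+1)=v_1, …, X(k+l−1)=v_{l−1}, X(k+l)=v} > c } ≤ P{ Σ_{k=0}^{n} 1{X̃(k)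 ∈ A} > c }. -/
/-!
The proof compares both counts with one explicit function `hitBound N m x`, the probability that the
auxiliary chain started at `x` visits `A` at least `m` times during the time window `[0, N)`.

*Auxiliary chain.* Conditionally on the path up to time `j`, at least `m` visits to `A` during
`[j, j + N)` have probability at least `hitBound N m (Y j)`: one-step analysis, by induction on `N`
(`hitBound_le_measure_visits`).

*Perturbed walk.* Since `v₁, …, v_{l-1}` differ from `u`, two occurrences of the pattern do not
overlap: an occurrence started at `k` is followed by a visit to `v` before the next one can start.
Hence `m` occurrences started inside a window force the path to visit, inside this window,
`A`, then `v`, then `A`, …, with `m` visits to `A` (the predicate `Alternates`, see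
`alternates_of_count`). The last occurrence need not be completed inside the window.
By induction on `N`, such an alternation has conditional probability at most `hitBound N m (X j)`
while `A` is awaited and at most `hitBound N m v` while `v` is awaited
(`measure_alternates_le`): outside `A` the two chains have the same transition probabilities,
and the time lost on the way from `A` to `v` is harmless because `hitBound` increases with `N`,
whereas the auxiliary chain makes this transition in a single step.

Since `X 0` and `Y 0` have the same law, averaging over the starting point gives the result.
-/

open MeasureTheory ProbabilityTheory Filter
open scoped Classical

/-! ### Cylinder sets of a discrete process -/

/-- The event that the process `Z` follows `path` up to and including time `n`. -/
def cylinderEvent {Ω : Type*} (Z : ℕ → Ω → ℤ × ℤ) (n : ℕ) (path : ℕ → ℤ × ℤ) : Set Ω :=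
  {ω | ∀ i ≤ n, Z i ω = path i}

/-- `Z` is a Markov chain with transition probabilities `K x y`, in terms of elementary
conditional probabilities given the cylinder events of positive measure. -/
def HasTransitions {Ω : Type*} [MeasurableSpace Ω] (μ : Measure Ω) (Z : ℕ → Ω → ℤ × ℤ)
    (K : ℤ × ℤ → ℤ × ℤ → ENNReal) : Prop :=
  ∀ (n : ℕ) (path : ℕ → ℤ × ℤ) (y : ℤ × ℤ), μ {ω | ∀ i ≤ n, Z i ω = path i} ≠ 0 →
    μ[{ω | Z (n + 1) ω = y} | {ω | ∀ i ≤ n, Z i ω = path i}] = K (path n) y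

lemma cylinderEvent_update {Ω : Type*} {Z : ℕ → Ω → ℤ × ℤ} (n : ℕ) (p : ℕ → ℤ × ℤ) (y : ℤ × ℤ) :
    cylinderEvent Z (n + 1) (Function.update p (n + 1) y) =
      cylinderEvent Z n p ∩ {ω | Z (n + 1) ω = y} := by
  ext ω
  simp only [cylinderEvent, Set.mem_ofPred_eq, Set.mem_inter_iff]
  constructor
  · intro h
    refine ⟨fun i hi => ?_, by simpa using h (n + 1) le_rfl⟩
    have := h i (by omega)
    rwa [Function.update_of_ne (by omega)] at this
  · rintro ⟨h1, h2⟩ i hi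
    rcases Nat.lt_or_ge n i with h | h
    · obtain rfl : i = n + 1 := by omega
      simpa using h2
    · rw [Function.update_of_ne (by omega)]
      exact h1 i h

section Cylinders

variable {Ω : Type*} [MeasurableSpace Ω] {μ : Measure Ω} {Z : ℕ → Ω → ℤ × ℤ}

lemma measurableSet_cylinderEvent (hZ : ∀ n, Measurable (Z n)) (n : ℕ) (p : ℕ → ℤ × ℤ) :
    MeasurableSet (cylinderEvent Z n p) := by
  have h : cylinderEvent Z n p = ⋂ i, ⋂ (_ : i ≤ n), Z i ⁻¹' {p i} := by
    ext ω; simp [cylinderEvent]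
  rw [h]
  exact MeasurableSet.iInter fun i => MeasurableSet.iInter fun _ =>
    hZ i (measurableSet_singleton _)

/-- The set `E` is arbitrary: only the cylinders have to be measurable. -/
lemma measure_cylinder_inter_eq_tsum (hZ : ∀ n, Measurable (Z n)) (n : ℕ) (p : ℕ → ℤ × ℤ)
    (E : Set Ω) :
    μ (cylinderEvent Z n p ∩ E) =
      ∑' y, μ (cylinderEvent Z (n + 1) (Function.update p (n + 1) y) ∩ E) := by
  have hU : cylinderEvent Z n p =
      ⋃ y, cylinderEvent Z (n + 1) (Function.update p (n + 1) y) := by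
    ext ω; simp [cylinderEvent_update]
  rw [← Measure.restrict_apply (measurableSet_cylinderEvent hZ n p), hU, measure_iUnion]
  · exact tsum_congr fun y => Measure.restrict_apply (measurableSet_cylinderEvent hZ _ _)
  · intro y z hyz
    rw [Function.onFun, Set.disjoint_left]
    intro ω h1 h2
    rw [cylinderEvent_update] at h1 h2
    exact hyz (h1.2.symm.trans h2.2)
  · exact fun y => measurableSet_cylinderEvent hZ _ _

lemma measure_eq_tsum_initial (hZ : ∀ n, Measurable (Z n)) (E : Set Ω) :
    μ E = ∑' y, μ (cylinderEvent Z 0 (fun _ => y) ∩ E) := by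
  have hU : (Set.univ : Set Ω) = ⋃ y, cylinderEvent Z 0 (fun _ => y) := by
    ext ω; simp [cylinderEvent]
  rw [← Measure.restrict_apply_univ, hU, measure_iUnion]
  · exact tsum_congr fun y => Measure.restrict_apply (measurableSet_cylinderEvent hZ _ _)
  · intro y z hyz
    rw [Function.onFun, Set.disjoint_left]
    intro ω h1 h2
    exact hyz ((h1 0 le_rfl).symm.trans (h2 0 le_rfl))
  · exact fun y => measurableSet_cylinderEvent hZ _ _

lemma measure_cylinder_succ [IsProbabilityMeasure μ] {K : ℤ × ℤ → ℤ × ℤ → ENNReal}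
    (hZ : ∀ n, Measurable (Z n)) (hK : HasTransitions μ Z K) (n : ℕ) (p : ℕ → ℤ × ℤ)
    (y : ℤ × ℤ) :
    μ (cylinderEvent Z (n + 1) (Function.update p (n + 1) y)) =
      μ (cylinderEvent Z n p) * K (p n) y := by
  rw [cylinderEvent_update]
  by_cases h0 : μ (cylinderEvent Z n p) = 0
  · rw [h0, zero_mul]
    exact measure_mono_null Set.inter_subset_left h0
  · rw [← hK n p y h0, mul_comm]
    exact (cond_mul_eq_inter (measurableSet_cylinderEvent hZ n p) _ _).symm

lemma tsum_measure_cylinder_mul [IsProbabilityMeasure μ] {K : ℤ × ℤ → ℤ × ℤ → ENNReal}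
    (hZ : ∀ n, Measurable (Z n)) (hK : HasTransitions μ Z K) (n : ℕ) (p : ℕ → ℤ × ℤ)
    (f : ℤ × ℤ → ENNReal) :
    ∑' y, μ (cylinderEvent Z (n + 1) (Function.update p (n + 1) y)) * f y =
      μ (cylinderEvent Z n p) * ∑' y, K (p n) y * f y := by
  rw [← ENNReal.tsum_mul_left]
  exact tsum_congr fun y => by rw [measure_cylinder_succ hZ hK, mul_assoc]

/-- Conditional bounds that do not depend on the next position pass to the present. -/
lemma measure_cylinder_inter_le_const (hZ : ∀ n, Measurable (Z n)) (n : ℕ) (p : ℕ → ℤ × ℤ)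
    (E : Set Ω) (h : ENNReal)
    (hE : ∀ q, μ (cylinderEvent Z (n + 1) q ∩ E) ≤ μ (cylinderEvent Z (n + 1) q) * h) :
    μ (cylinderEvent Z n p ∩ E) ≤ μ (cylinderEvent Z n p) * h := by
  have h1 := measure_cylinder_inter_eq_tsum (μ := μ) hZ n p Set.univ
  simp only [Set.inter_univ] at h1
  rw [measure_cylinder_inter_eq_tsum hZ, h1, ← ENNReal.tsum_mul_right]
  exact ENNReal.tsum_le_tsum fun y => hE _

end Cylinders

/-! ### The comparison function -/

/-- The probability that the chain with transition probabilities `P` outside `A` and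
deterministic jumps to `v` from `A`, started at `x`, visits `A` at least `m` times during
`[0, N)`; defined through its one-step recursion. -/
noncomputable def hitBound (A : Finset (ℤ × ℤ)) (v : ℤ × ℤ) (P : ℤ × ℤ → ℤ × ℤ → ENNReal) :
    ℕ → ℕ → ℤ × ℤ → ENNReal
  | _, 0, _ => 1
  | 0, _ + 1, _ => 0
  | N + 1, m + 1, x =>
    if x ∈ A then hitBound A v P N m v else ∑' y, P x y * hitBound A v P N (m + 1) y

lemma hitBound_zero_right (A : Finset (ℤ × ℤ)) (v : ℤ × ℤ) (P : ℤ × ℤ → ℤ × ℤ → ENNReal)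
    (N : ℕ) (x : ℤ × ℤ) : hitBound A v P N 0 x = 1 := by
  cases N <;> rw [hitBound]

lemma hitBound_mono (A : Finset (ℤ × ℤ)) (v : ℤ × ℤ) (P : ℤ × ℤ → ℤ × ℤ → ENNReal) (N : ℕ) :
    ∀ m x, hitBound A v P N m x ≤ hitBound A v P (N + 1) m x := by
  induction N with
  | zero =>
    rintro (_ | m) x
    · simp [hitBound_zero_right]
    · simp [hitBound]
  | succ N ih =>
    rintro (_ | m) x
    · simp [hitBound_zero_right]
    · rw [hitBound, hitBound]
      split_ifs
      · exact ih _ _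
      · exact ENNReal.tsum_le_tsum fun y => mul_le_mul_right (ih _ _) _

/-! ### The auxiliary chain -/

lemma count_shift_succ (Q : ℕ → Prop) [DecidablePred Q] (j N : ℕ) :
    Nat.count (fun k => Q (j + k)) (N + 1) =
      Nat.count (fun k => Q (j + 1 + k)) N + if Q j then 1 else 0 := by
  rw [Nat.count_succ']
  simp only [Nat.add_zero, Nat.add_assoc, Nat.add_comm 1]

lemma hitBound_le_measure_visits {Ω : Type*} [MeasurableSpace Ω] {μ : Measure Ω}
    [IsProbabilityMeasure μ] {Y : ℕ → Ω → ℤ × ℤ} (hY : ∀ n, Measurable (Y n))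
    {A : Finset (ℤ × ℤ)} {v : ℤ × ℤ} {P K : ℤ × ℤ → ℤ × ℤ → ENNReal}
    (hK : HasTransitions μ Y K) (hKout : ∀ x ∉ A, ∀ y, K x y = P x y)
    (hKin : ∀ x ∈ A, ∀ y, K x y = if y = v then 1 else 0) (N : ℕ) :
    ∀ (m j : ℕ) (p : ℕ → ℤ × ℤ),
      μ (cylinderEvent Y j p) * hitBound A v P N m (p j) ≤
        μ (cylinderEvent Y j p ∩ {ω | m ≤ Nat.count (fun k => Y (j + k) ω ∈ A) N}) := by
  induction N with
  | zero =>
    rintro (_ | m) j p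
    · simp [hitBound]
    · simp [hitBound]
  | succ N ih =>
    rintro (_ | m) j p
    · simp [hitBound]
    -- One-step analysis: `m'` visits are still needed after time `j`.
    have step : ∀ m', (∀ ω ∈ cylinderEvent Y j p,
          m' ≤ Nat.count (fun k => Y (j + 1 + k) ω ∈ A) N →
            m + 1 ≤ Nat.count (fun k => Y (j + k) ω ∈ A) (N + 1)) →
        μ (cylinderEvent Y j p) * ∑' y, K (p j) y * hitBound A v P N m' y ≤
          μ (cylinderEvent Y j p ∩
            {ω | m + 1 ≤ Nat.count (fun k => Y (j + k) ω ∈ A) (N + 1)}) := by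
      intro m' hm'
      calc _ = ∑' y, μ (cylinderEvent Y (j + 1) (Function.update p (j + 1) y)) *
              hitBound A v P N m' y := (tsum_measure_cylinder_mul hY hK _ _ _).symm
        _ ≤ ∑' y, μ (cylinderEvent Y (j + 1) (Function.update p (j + 1) y) ∩
              {ω | m' ≤ Nat.count (fun k => Y (j + 1 + k) ω ∈ A) N}) := by
            refine ENNReal.tsum_le_tsum fun y => ?_
            simpa using ih m' (j + 1) (Function.update p (j + 1) y)
        _ = μ (cylinderEvent Y j p ∩
              {ω | m' ≤ Nat.count (fun k => Y (j + 1 + k) ω ∈ A) N}) :=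
            (measure_cylinder_inter_eq_tsum hY _ _ _).symm
        _ ≤ _ := by
            refine measure_mono ?_
            rintro ω ⟨h1, h2⟩
            exact ⟨h1, hm' ω h1 h2⟩
    rw [hitBound]
    by_cases hx : p j ∈ A
    · rw [if_pos hx]
      have hs : ∑' y, K (p j) y * hitBound A v P N m y = hitBound A v P N m v := by
        rw [tsum_eq_single v]
        · simp [hKin _ hx]
        · intro y hy
          simp [hKin _ hx, hy]
      rw [← hs]
      refine step m fun ω hω h => ?_
      have hj : Y j ω ∈ A := by rw [hω j le_rfl]; exact hx
      rw [count_shift_succ (fun k => Y k ω ∈ A), if_pos hj]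
      omega
    · rw [if_neg hx]
      have hs : ∑' y, K (p j) y * hitBound A v P N (m + 1) y =
          ∑' y, P (p j) y * hitBound A v P N (m + 1) y :=
        tsum_congr fun y => by rw [hKout _ hx]
      rw [← hs]
      refine step (m + 1) fun ω hω h => ?_
      rw [count_shift_succ (fun k => Y k ω ∈ A)]
      omega

/-! ### Alternating visits to `A` and `v` -/

/-- `Alternates A v w b N m j`: during the times `[j, j + N)` the path `w` visits `A`, then `v`,
then `A`, and so on, with `m` visits to `A` in total. The flag `b` tells which visit is awaited
first: one to `A` if `b = false`, one to `v` if `b = true`. -/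
def Alternates (A : Finset (ℤ × ℤ)) (v : ℤ × ℤ) (w : ℕ → ℤ × ℤ) :
    Bool → ℕ → ℕ → ℕ → Prop
  | _, _, 0, _ => True
  | _, 0, _ + 1, _ => False
  | false, N + 1, m + 1, j =>
    if w j ∈ A then Alternates A v w true N m (j + 1)
    else Alternates A v w false N (m + 1) (j + 1)
  | true, N + 1, m + 1, j =>
    if w j = v then Alternates A v w false N (m + 1) (j + 1)
    else Alternates A v w true N (m + 1) (j + 1)

lemma alternates_zero (A : Finset (ℤ × ℤ)) (v : ℤ × ℤ) (w : ℕ → ℤ × ℤ) (b : Bool) (N j : ℕ) :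
    Alternates A v w b N 0 j := by
  cases b <;> cases N <;> simp [Alternates]

/-- If marked times lie in `A` and every marked time is followed by a visit to `v` before the next
marked time, then `m` marked times in a window force `m` alternations. While `v` is awaited, the
claim holds if one marked time can be spared, or if `v` comes before the next marked time. -/
lemma alternates_of_count {A : Finset (ℤ × ℤ)} {v : ℤ × ℤ} (hv : v ∉ A) {w : ℕ → ℤ × ℤ}
    {pat : ℕ → Prop} (hA : ∀ k, pat k → w k ∈ A)
    (hnext : ∀ k, pat k → ∃ t, k + 1 ≤ t ∧ w t = v ∧ ∀ i, k + 1 ≤ i → i < t → ¬ pat i) (N : ℕ) :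
    ∀ m j, (m ≤ Nat.count (fun k => pat (j + k)) N → Alternates A v w false N m j) ∧
      (m + 1 ≤ Nat.count (fun k => pat (j + k)) N → Alternates A v w true N m j) ∧
      (m ≤ Nat.count (fun k => pat (j + k)) N →
        (∃ t, j ≤ t ∧ w t = v ∧ ∀ i, j ≤ i → i < t → ¬ pat i) →
        Alternates A v w true N m j) := by
  induction N with
  | zero =>
    rintro (_ | m) j
    · simp [alternates_zero]
    · simp
  | succ N ih =>
    rintro (_ | m) j
    · simp [alternates_zero]
    rw [count_shift_succ pat]
    refine ⟨fun h => ?_, fun h => ?_, fun h ht => ?_⟩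
    · rw [Alternates]
      by_cases hj : w j ∈ A
      · rw [if_pos hj]
        by_cases hp : pat j
        · rw [if_pos hp] at h
          exact (ih m (j + 1)).2.2 (by omega) (hnext j hp)
        · rw [if_neg hp] at h
          exact (ih m (j + 1)).2.1 (by omega)
      · rw [if_neg hj]
        rw [if_neg fun hp => hj (hA j hp)] at h
        exact (ih (m + 1) (j + 1)).1 (by omega)
    · rw [Alternates]
      by_cases hj : w j = v
      · rw [if_pos hj]
        refine (ih (m + 1) (j + 1)).1 ?_
        split_ifs at h <;> omega
      · rw [if_neg hj]
        by_cases hp : pat j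
        · rw [if_pos hp] at h
          exact (ih (m + 1) (j + 1)).2.2 (by omega) (hnext j hp)
        · rw [if_neg hp] at h
          exact (ih (m + 1) (j + 1)).2.1 (by omega)
    · rw [Alternates]
      obtain ⟨t, hjt, hwt, hno⟩ := ht
      by_cases hj : w j = v
      · rw [if_pos hj]
        rw [if_neg fun hp => hv (hj ▸ hA j hp)] at h
        exact (ih (m + 1) (j + 1)).1 (by omega)
      · rw [if_neg hj]
        have hlt : j < t := lt_of_le_of_ne hjt fun e => hj (e ▸ hwt)
        rw [if_neg (hno j le_rfl hlt)] at h
        exact (ih (m + 1) (j + 1)).2.2 (by omega)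
          ⟨t, hlt, hwt, fun i h1 h2 => hno i (by omega) h2⟩

/-! ### The perturbed walk -/

lemma measure_alternates_le {Ω : Type*} [MeasurableSpace Ω] {μ : Measure Ω}
    [IsProbabilityMeasure μ] {X : ℕ → Ω → ℤ × ℤ} (hX : ∀ n, Measurable (X n))
    {A : Finset (ℤ × ℤ)} {v : ℤ × ℤ} (hv : v ∉ A) {P K : ℤ × ℤ → ℤ × ℤ → ENNReal}
    (hK : HasTransitions μ X K) (hKout : ∀ x ∉ A, ∀ y, K x y = P x y) (N : ℕ) :
    ∀ (m j : ℕ) (p : ℕ → ℤ × ℤ),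
      μ (cylinderEvent X j p ∩ {ω | Alternates A v (fun k => X k ω) false N m j}) ≤
          μ (cylinderEvent X j p) * hitBound A v P N m (p j) ∧
      μ (cylinderEvent X j p ∩ {ω | Alternates A v (fun k => X k ω) true N m j}) ≤
          μ (cylinderEvent X j p) * hitBound A v P N m v := by
  induction N with
  | zero =>
    rintro (_ | m) j p
    · simp [hitBound, alternates_zero]
    · simp [hitBound, Alternates]
  | succ N ih =>
    rintro (_ | m) j p
    · simp [hitBound, alternates_zero]
    -- One-step analysis at a point outside `A`, where `K` and `P` agree.
    have step : p j ∉ A →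
        μ (cylinderEvent X j p ∩
            {ω | Alternates A v (fun k => X k ω) false N (m + 1) (j + 1)}) ≤
          μ (cylinderEvent X j p) * ∑' y, P (p j) y * hitBound A v P N (m + 1) y := by
      intro hx
      have hs : ∑' y, K (p j) y * hitBound A v P N (m + 1) y =
          ∑' y, P (p j) y * hitBound A v P N (m + 1) y :=
        tsum_congr fun y => by rw [hKout _ hx]
      rw [← hs, ← tsum_measure_cylinder_mul hX hK, measure_cylinder_inter_eq_tsum hX]
      refine ENNReal.tsum_le_tsum fun y => ?_
      simpa using (ih (m + 1) (j + 1) (Function.update p (j + 1) y)).1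
    constructor
    · rw [hitBound]
      by_cases hx : p j ∈ A
      · rw [if_pos hx]
        refine le_trans (measure_mono ?_) (measure_cylinder_inter_le_const hX j p
          {ω | Alternates A v (fun k => X k ω) true N m (j + 1)} _
          fun q => (ih m (j + 1) q).2)
        rintro ω ⟨h1, h2⟩
        have hj : X j ω ∈ A := by rw [h1 j le_rfl]; exact hx
        rw [Set.mem_ofPred_eq, Alternates, if_pos hj] at h2
        exact ⟨h1, h2⟩
      · rw [if_neg hx]
        refine le_trans (measure_mono ?_) (step hx)
        rintro ω ⟨h1, h2⟩
        have hj : X j ω ∉ A := by rw [h1 j le_rfl]; exact hx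
        rw [Set.mem_ofPred_eq, Alternates, if_neg hj] at h2
        exact ⟨h1, h2⟩
    · by_cases hx : p j = v
      · rw [hitBound, if_neg hv]
        refine le_trans (measure_mono ?_) (hx ▸ step (hx ▸ hv))
        rintro ω ⟨h1, h2⟩
        have hj : X j ω = v := by rw [h1 j le_rfl]; exact hx
        rw [Set.mem_ofPred_eq, Alternates, if_pos hj] at h2
        exact ⟨h1, h2⟩
      · refine le_trans ?_ (mul_le_mul_right (hitBound_mono A v P N (m + 1) v) _)
        refine le_trans (measure_mono ?_) (measure_cylinder_inter_le_const hX j p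
          {ω | Alternates A v (fun k => X k ω) true N (m + 1) (j + 1)} _
          fun q => (ih (m + 1) (j + 1) q).2)
        rintro ω ⟨h1, h2⟩
        have hj : X j ω ≠ v := by rw [h1 j le_rfl]; exact hx
        rw [Set.mem_ofPred_eq, Alternates, if_neg hj] at h2
        exact ⟨h1, h2⟩

/-- Let `X` be a standard random walk in `ℤ²` perturbed on a finite set
`A` (jumps `ξ` outside `A`, jumps `η^{(x)}` from `x ∈ A`), with `E[ξ] = 0`, `E[|ξ|²] < ∞`,
Condition B and `max_{x∈A} P{|η^{(x)}| > t} = o(1/log t)`. Fix `u ∈ A`, `v ∉ A`, `l ≥ 1`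
and distinct `v₁, …, v_{l−1} ∈ A \ {u}`. Let `X̃` be the Markov chain with `X̃(0) ∼ X(0)`,
the same transition probabilities as `X` from points outside `A`, and deterministic jumps
to `v` from every point of `A`. Then for all `c > 0` and all `n`,
`P{Σ_{k=0}^n 1{X(k)=u, X(k+1)=v₁, …, X(k+l−1)=v_{l−1}, X(k+l)=v} > c}
  ≤ P{Σ_{k=0}^n 1{X̃(k) ∈ A} > c}`. -/
theorem pattern_count_dominated_by_auxiliary_chain
    -- auxiliary probability space carrying the step variables `ξ` and `η^{(x)}`
    {Ω₀ : Type*} [MeasurableSpace Ω₀] (μ₀ : Measure Ω₀) [IsProbabilityMeasure μ₀]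
    (ξ : Ω₀ → ℤ × ℤ) (η : ℤ × ℤ → Ω₀ → ℤ × ℤ)
    (hξmeas : Measurable ξ) (hηmeas : ∀ x, Measurable (η x))
    (A : Finset (ℤ × ℤ))
    -- the chain `X`
    {Ω : Type*} [MeasurableSpace Ω] (μ : Measure Ω) [IsProbabilityMeasure μ]
    (X : ℕ → Ω → ℤ × ℤ) (hXmeas : ∀ n, Measurable (X n))
    (hXmarkov : ∀ (n : ℕ) (path : ℕ → ℤ × ℤ) (y : ℤ × ℤ),
      μ {ω | ∀ i ≤ n, X i ω = path i} ≠ 0 →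
      μ[{ω | X (n + 1) ω = y} | {ω | ∀ i ≤ n, X i ω = path i}] =
        (if path n ∈ A then μ₀ {ω | η (path n) ω = y - path n}
         else μ₀ {ω | ξ ω = y - path n}))
    -- the auxiliary chain `X̃`
    {Ω' : Type*} [MeasurableSpace Ω'] (μ' : Measure Ω') [IsProbabilityMeasure μ']
    (Y : ℕ → Ω' → ℤ × ℤ) (hYmeas : ∀ n, Measurable (Y n))
    (v : ℤ × ℤ) (hv : v ∉ A)
    (hY0 : Measure.map (Y 0) μ' = Measure.map (X 0) μ)
    (hYmarkov : ∀ (n : ℕ) (path : ℕ → ℤ × ℤ) (y : ℤ × ℤ),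
      μ' {ω | ∀ i ≤ n, Y i ω = path i} ≠ 0 →
      μ'[{ω | Y (n + 1) ω = y} | {ω | ∀ i ≤ n, Y i ω = path i}] =
        (if path n ∈ A then (if y = v then 1 else 0)
         else μ₀ {ω | ξ ω = y - path n}))
    -- `E[ξ] = (0,0)`
    (hmean1 : ∫ ω, ((ξ ω).1 : ℝ) ∂μ₀ = 0) (hmean2 : ∫ ω, ((ξ ω).2 : ℝ) ∂μ₀ = 0)
    -- `E[|ξ|²] < ∞`
    (hmom : Integrable (fun ω => nrm2 (ξ ω) ^ 2) μ₀)
    -- Condition B (i): the walk with step `ξ` is aperiodic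
    (haper : ∀ H : AddSubgroup (ℤ × ℤ), (∀ z, μ₀ {ω | ξ ω = z} ≠ 0 → z ∈ H) → H = ⊤)
    -- Condition B (ii): every point of `ℤ² \ A` is accessible for `X` from every point of `A`
    (hacc : ∀ a ∈ A, ∀ y : ℤ × ℤ, y ∉ A → ∃ (n : ℕ) (p : ℕ → ℤ × ℤ), p 0 = a ∧ p n = y ∧
      ∀ i < n, (if p i ∈ A then μ₀ {ω | η (p i) ω = p (i + 1) - p i}
        else μ₀ {ω | ξ ω = p (i + 1) - p i}) ≠ 0)
    -- `max_{x∈A} P{|η^{(x)}| > t} = o(1/log t)` as `t → ∞`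
    (hηtail : ∀ x ∈ A, Tendsto
      (fun t : ℝ => Real.log t * (μ₀ {ω | t < nrm2 (η x ω)}).toReal) atTop (nhds 0))
    -- the fixed pattern `u, v₁, …, v_{l−1}, v`
    (u : ℤ × ℤ) (hu : u ∈ A) (l : ℕ) (hl : 1 ≤ l) (vs : ℕ → ℤ × ℤ)
    (hvsA : ∀ i, 1 ≤ i → i ≤ l - 1 → vs i ∈ A ∧ vs i ≠ u)
    (hvsdist : ∀ i j, 1 ≤ i → i ≤ l - 1 → 1 ≤ j → j ≤ l - 1 → vs i = vs j → i = j) :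
    ∀ c : ℝ, 0 < c → ∀ n : ℕ,
      μ {ω | c < (((Finset.range (n + 1)).filter (fun k =>
            X k ω = u ∧ (∀ i, 1 ≤ i → i ≤ l - 1 → X (k + i) ω = vs i) ∧
              X (k + l) ω = v)).card : ℝ)} ≤
        μ' {ω | c < (((Finset.range (n + 1)).filter (fun k => Y k ω ∈ A)).card : ℝ)} := by
  intro c hc n
  let P : ℤ × ℤ → ℤ × ℤ → ENNReal := fun x y => μ₀ {ω | ξ ω = y - x}
  let m := ⌊c⌋₊ + 1
  have hcard : ∀ s : Finset ℕ, c < (s.card : ℝ) ↔ m ≤ s.card := fun s =>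
    (Nat.floor_lt hc.le).symm
  have hinit : ∀ y, μ (cylinderEvent X 0 fun _ => y) = μ' (cylinderEvent Y 0 fun _ => y) := by
    intro y
    have h := congrArg (fun ν => ν {y}) hY0
    simp only [Measure.map_apply (hXmeas 0) (measurableSet_singleton y),
      Measure.map_apply (hYmeas 0) (measurableSet_singleton y)] at h
    simpa [cylinderEvent, Set.preimage] using h.symm
  let pat : Ω → ℕ → Prop := fun ω k => X k ω = u ∧
    (∀ i, 1 ≤ i → i ≤ l - 1 → X (k + i) ω = vs i) ∧ X (k + l) ω = v
  have halt : ∀ ω, m ≤ ((Finset.range (n + 1)).filter (pat ω)).card →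
      Alternates A v (fun k => X k ω) false (n + 1) m 0 := by
    intro ω h
    refine (alternates_of_count hv (pat := pat ω) ?_ ?_ (n + 1) m 0).1 ?_
    · rintro k ⟨hk, -⟩
      simpa [hk] using hu
    · rintro k ⟨-, hk, hkl⟩
      -- The occurrence started at `k` ends in `v` at time `k + l`, and avoids `u` in between.
      refine ⟨k + l, by omega, hkl, ?_⟩
      rintro i h1 h2 ⟨hi, -⟩
      have h3 := hk (i - k) (by omega) (by omega)
      rw [show k + (i - k) = i by omega, hi] at h3
      exact (hvsA (i - k) (by omega) (by omega)).2 h3.symm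
    · simp only [Nat.zero_add]
      rw [Nat.count_eq_card_filter_range]
      exact h
  have hvis : ∀ ω, m ≤ Nat.count (fun k => Y (0 + k) ω ∈ A) (n + 1) →
      m ≤ ((Finset.range (n + 1)).filter (fun k => Y k ω ∈ A)).card := by
    intro ω h
    simp only [Nat.zero_add] at h
    rw [Nat.count_eq_card_filter_range] at h
    convert h
  simp only [hcard]
  refine le_trans (measure_mono (t := {ω | Alternates A v (fun k => X k ω) false (n + 1) m 0})
    ?_) ?_
  · intro ω hω
    -- The two filters differ only in their decidability instances.
    refine halt ω (le_of_le_of_eq hω ?_)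
    congr!
  calc μ {ω | Alternates A v (fun k => X k ω) false (n + 1) m 0}
      = ∑' y, μ (cylinderEvent X 0 (fun _ => y) ∩
          {ω | Alternates A v (fun k => X k ω) false (n + 1) m 0}) :=
        measure_eq_tsum_initial hXmeas _
    _ ≤ ∑' y, μ (cylinderEvent X 0 fun _ => y) * hitBound A v P (n + 1) m y := by
        refine ENNReal.tsum_le_tsum fun y => ?_
        exact (measure_alternates_le hXmeas hv (P := P)
          (K := fun x y => if x ∈ A then μ₀ {ω | η x ω = y - x} else μ₀ {ω | ξ ω = y - x})
          hXmarkov (fun x hx y => if_neg hx) (n + 1) m 0 fun _ => y).1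
    _ = ∑' y, μ' (cylinderEvent Y 0 fun _ => y) * hitBound A v P (n + 1) m y :=
        tsum_congr fun y => by rw [hinit]
    _ ≤ ∑' y, μ' (cylinderEvent Y 0 (fun _ => y) ∩
          {ω | m ≤ Nat.count (fun k => Y (0 + k) ω ∈ A) (n + 1)}) := by
        refine ENNReal.tsum_le_tsum fun y => ?_
        exact hitBound_le_measure_visits hYmeas (P := P)
          (K := fun x y => if x ∈ A then (if y = v then 1 else 0) else μ₀ {ω | ξ ω = y - x})
          hYmarkov (fun x hx y => if_neg hx) (fun x hx y => if_pos hx) (n + 1) m 0 fun _ => y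
    _ = μ' {ω | m ≤ Nat.count (fun k => Y (0 + k) ω ∈ A) (n + 1)} :=
        (measure_eq_tsum_initial hYmeas _).symm
    _ ≤ _ := by
        refine measure_mono ?_
        intro ω hω
        exact hvis ω hω
end
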